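/- Let S be a factorizable inverse monoid with zero, with semilattice of idempotents E and group of units G, such that the natural connection θ is a dual isomorphism from E onto a sublattice of L(G). Then any two composition subcentral (resp. composition central) idempotent series of S are isomorphic (an analogue of the Jordan–Hölder theorem). -/

import Mathlib

/-- An inverse monoid: a monoid in which every element `a` has an inverse `a⁻¹`
satisfying `a * a⁻¹ * a = a` and `a⁻¹ * a * a⁻¹ = a⁻¹`, and this inverse is unique. -/
class InverseMonoid (S : Type*) extends Monoid S, Inv S where
  mul_inv_mul : ∀ a : S, a * a⁻¹ * a = a
  inv_mul_inv : ∀ a : S, a⁻¹ * a * a⁻¹ = a⁻¹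
  inv_unique : ∀ a b : S, a * b * a = a → b * a * b = b → b = a⁻¹

/-- An inverse monoid with a (two-sided absorbing) zero element. -/
class InverseMonoidWithZero (S : Type*) extends InverseMonoid S, Zero S where
  zero_mul : ∀ a : S, 0 * a = 0
  mul_zero : ∀ a : S, a * 0 = 0

/-- The natural partial order on an inverse monoid: `a ≤ b` iff `a = e * b`
for some idempotent `e`. -/
def NatLe {S : Type*} [Monoid S] (a b : S) : Prop :=
  ∃ e : S, IsIdempotentElem e ∧ a = e * b

/-- The filter `e↑ = {s | e ≤ s}` generated by `e`. -/
def upfilter {S : Type*} [Monoid S] (e : S) : Set S := {s | NatLe e s}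

/-- `c` is central in (a subset) `T`: it belongs to `T` and commutes with all elements of `T`. -/
def CentralIn {S : Type*} [Mul S] (T : Set S) (c : S) : Prop :=
  c ∈ T ∧ ∀ s ∈ T, c * s = s * c

/-- A monoid is factorizable if every element is a product of an idempotent and a unit. -/
def Factorizable (S : Type*) [Monoid S] : Prop :=
  ∀ s : S, ∃ e g : S, IsIdempotentElem e ∧ IsUnit g ∧ s = e * g

/-- The natural connection `θ`: for an (idempotent) `e`, the subgroup
`eθ = {g ∈ G : e * g = e}` of the group of units. -/
def natconn {S : Type*} [Monoid S] (e : S) : Subgroup Sˣ where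
  carrier := {g : Sˣ | e * (g : S) = e}
  one_mem' := by simp
  mul_mem' := by
    intro a b ha hb
    simp only [Set.mem_setOf_eq, Units.val_mul] at *
    rw [← mul_assoc, ha, hb]
  inv_mem' := by
    intro a ha
    simp only [Set.mem_setOf_eq] at *
    nth_rewrite 1 [← ha]
    rw [mul_assoc, ← Units.val_mul, mul_inv_cancel, Units.val_one, mul_one]

/-- The natural connection is a dual isomorphism from the idempotents onto a
sublattice of the lattice of subgroups of the group of units: it is injective on
idempotents, order-reversing in both directions, and its image is closed under
joins and meets of subgroups. -/
def NatconnDualIso (S : Type*) [Monoid S] : Prop :=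
  (∀ e f : S, IsIdempotentElem e → IsIdempotentElem f → natconn e = natconn f → e = f) ∧
  (∀ e f : S, IsIdempotentElem e → IsIdempotentElem f →
    (NatLe e f ↔ natconn f ≤ natconn e)) ∧
  (∀ e f : S, IsIdempotentElem e → IsIdempotentElem f →
    (∃ h : S, IsIdempotentElem h ∧ natconn h = natconn e ⊔ natconn f) ∧
    (∃ h : S, IsIdempotentElem h ∧ natconn h = natconn e ⊓ natconn f))

/-- `j` is the join (least upper bound) of `e` and `f` with respect to the natural order. -/
def IsNatJoin {S : Type*} [Monoid S] (e f j : S) : Prop :=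
  NatLe e j ∧ NatLe f j ∧ ∀ x : S, NatLe e x → NatLe f x → NatLe j x

/-- `F_{e,f} = f · e↑`. -/
def Fef {S : Type*} [Monoid S] (e f : S) : Set S := (f * ·) '' upfilter e

/-- `UF_{e,f}`: the group of units of the monoid `F_{e,f}` (whose identity is `f`). -/
def UFef {S : Type*} [Monoid S] (e f : S) : Set S :=
  {x ∈ Fef e f | ∃ y ∈ Fef e f, x * y = f ∧ y * x = f}

/-- The centre of a subset `T`. -/
def ZIn {S : Type*} [Mul S] (T : Set S) : Set S := {x ∈ T | ∀ y ∈ T, x * y = y * x}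

/-- Two subsets are isomorphic as semigroups (with the induced multiplication). -/
def SubIso {S : Type*} [Mul S] (A B : Set S) : Prop :=
  ∃ φ : S → S, Set.BijOn φ A B ∧ ∀ a ∈ A, ∀ b ∈ A, φ (a * b) = φ a * φ b

/-- A subcentral idempotent series between `0` and `a`. -/
def IsSubcentralSeriesBetween {S : Type*} [Monoid S] [Zero S] (n : ℕ) (c : ℕ → S) (a : S) :
    Prop :=
  c 0 = 0 ∧ c n = a ∧ (∀ i ≤ n, IsIdempotentElem (c i)) ∧
    ∀ i < n, CentralIn (upfilter (c i)) (c (i + 1))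

/-- A subcentral idempotent series of `S` (between `0` and `1`). -/
def IsSubcentralSeries {S : Type*} [Monoid S] [Zero S] (n : ℕ) (c : ℕ → S) : Prop :=
  IsSubcentralSeriesBetween n c 1

/-- A central idempotent series of `S`. -/
def IsCentralSeries {S : Type*} [Monoid S] [Zero S] (n : ℕ) (c : ℕ → S) : Prop :=
  c 0 = 0 ∧ c n = 1 ∧ (∀ i ≤ n, IsIdempotentElem (c i)) ∧
    (∀ i < n, NatLe (c i) (c (i + 1))) ∧
    ∀ i < n, CentralIn Set.univ (c (i + 1))

/-- A subcentral idempotent: one occurring in some subcentral idempotent series of `S`. -/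
def IsSubcentralIdem {S : Type*} [Monoid S] [Zero S] (e : S) : Prop :=
  ∃ (n : ℕ) (c : ℕ → S), IsSubcentralSeries n c ∧ ∃ i ≤ n, c i = e

/-- A `G`-nilpotent series: a chain of central idempotents from `0` to `1` with
`F_{eᵢ,eᵢ₊₁} ⊆ Z(F_{0,eᵢ₊₁})`. -/
def GNilpotentSeries {S : Type*} [Monoid S] [Zero S] (n : ℕ) (c : ℕ → S) : Prop :=
  c 0 = 0 ∧ c n = 1 ∧ (∀ i ≤ n, IsIdempotentElem (c i) ∧ CentralIn Set.univ (c i)) ∧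
    (∀ i < n, NatLe (c i) (c (i + 1))) ∧
    ∀ i < n, Fef (c i) (c (i + 1)) ⊆ ZIn (Fef 0 (c (i + 1)))

/-- A `G`-solvable series: a chain of central idempotents from `0` to `1` with
each `F_{eᵢ,eᵢ₊₁}` commutative. -/
def GSolvableSeries {S : Type*} [Monoid S] [Zero S] (n : ℕ) (c : ℕ → S) : Prop :=
  c 0 = 0 ∧ c n = 1 ∧ (∀ i ≤ n, IsIdempotentElem (c i) ∧ CentralIn Set.univ (c i)) ∧
    (∀ i < n, NatLe (c i) (c (i + 1))) ∧
    ∀ i < n, ∀ x ∈ Fef (c i) (c (i + 1)), ∀ y ∈ Fef (c i) (c (i + 1)), x * y = y * x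

/-- `S` is `G`-nilpotent. -/
def GNilpotent (S : Type*) [Monoid S] [Zero S] : Prop :=
  ∃ (n : ℕ) (c : ℕ → S), GNilpotentSeries n c

/-- `S` is `G`-solvable. -/
def GSolvable (S : Type*) [Monoid S] [Zero S] : Prop :=
  ∃ (n : ℕ) (c : ℕ → S), GSolvableSeries n c

/-- Two idempotent series are isomorphic: same length, and a one-to-one correspondence
between their factors under which corresponding factors are isomorphic. -/
def SeriesIso {S : Type*} [Monoid S] (n : ℕ) (c : ℕ → S) (n' : ℕ) (d : ℕ → S) : Prop :=
  n = n' ∧ ∃ σ : ℕ → ℕ, Set.BijOn σ {i | i < n} {i | i < n'} ∧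
    ∀ i < n, SubIso (Fef (c i) (c (i + 1))) (Fef (d (σ i)) (d (σ i + 1)))

/-- A composition series (for a kind `P` of series): it has no repeated terms, and any
refinement of it (of the same kind) only repeats its terms. -/
def IsCompositionOf {S : Type*} (P : ℕ → (ℕ → S) → Prop) (n : ℕ) (c : ℕ → S) : Prop :=
  P n c ∧ (∀ i ≤ n, ∀ j ≤ n, c i = c j → i = j) ∧
    ∀ (m : ℕ) (d : ℕ → S), P m d → (∀ i ≤ n, ∃ j ≤ m, d j = c i) →
      ∀ j ≤ m, ∃ i ≤ n, d j = c i

/-!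
The natural connection `e ↦ natconn e` identifies the idempotents, ordered by reverse natural order,
with a lattice of subgroups of the group of units. An idempotent `x` commutes with a unit `g` iff
`g` normalizes `natconn x`, so factorizability turns "`x` is central in `y↑`" into
"`natconn x` is normal in `natconn y`". Subcentral series thus become subnormal series, and central
series become series of normal subgroups; both are subnormal series of `M`-invariant subgroups,
for `M = ⊥` and `M = ⊤` respectively.

When `natconn y` normalizes `natconn x`, Dedekind's modular law shows that multiplication by `x` is
an isomorphism from the factor `F_{y, x ⊓ y}` onto `F_{x ⊔ y, x}`. With this second isomorphism
theorem, the Jordan–Hölder theorem for lattices applies.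
-/

open Subgroup

section Group

open scoped Pointwise

variable {G : Type*} [Group G]

theorem sup_inf_assoc_of_coe_sup_eq_mul {A B C : Subgroup G}
    (hAB : ((A ⊔ B : Subgroup G) : Set G) = (A : Set G) * (B : Set G)) (hAC : A ≤ C) :
    (A ⊔ B) ⊓ C = A ⊔ B ⊓ C := by
  refine le_antisymm (fun g hg ↦ ?_)
    (le_inf (sup_le_sup_left inf_le_left A) (sup_le hAC inf_le_right))
  have hg_mul : g ∈ ((A : Set G) * (B : Set G)) ∩ (C : Set G) := ⟨hAB ▸ hg.1, hg.2⟩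
  rw [← mul_inf_assoc A B C hAC] at hg_mul
  obtain ⟨a, ha, b, hb, rfl⟩ := hg_mul
  exact mul_mem_sup ha hb

/-- `H` is normal in `K`, and both are invariant under conjugation by `M`. Taking `M = ⊥` gives
normality of `H` in `K`; taking `M = ⊤` gives pairs `H ≤ K` of normal subgroups of `G`. -/
structure OperatorNormal (M H K : Subgroup G) : Prop where
  le : H ≤ K
  le_normalizer : K ≤ normalizer H
  left_invariant : M ≤ normalizer H
  right_invariant : M ≤ normalizer K

namespace OperatorNormal

variable {M H K L : Subgroup G}

theorem bot_iff : OperatorNormal ⊥ H K ↔ H ≤ K ∧ K ≤ normalizer H :=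
  ⟨fun h ↦ ⟨h.le, h.le_normalizer⟩, fun h ↦ ⟨h.1, h.2, bot_le, bot_le⟩⟩

theorem top_iff : OperatorNormal ⊤ H K ↔ H ≤ K ∧ H.Normal ∧ K.Normal := by
  simp only [← normalizer_eq_top_iff, ← top_le_iff]
  exact ⟨fun h ↦ ⟨h.le, h.left_invariant, h.right_invariant⟩,
    fun h ↦ ⟨h.1, le_top.trans h.2.1, h.2.1, h.2.2⟩⟩

theorem sup (hH : OperatorNormal M H L) (hK : OperatorNormal M K L) :
    OperatorNormal M (H ⊔ K) L where
  le := sup_le hH.le hK.le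
  le_normalizer := (le_inf hH.le_normalizer hK.le_normalizer).trans
    (normalizer_inf_normalizer_le_normalizer_sup H K)
  left_invariant := (le_inf hH.left_invariant hK.left_invariant).trans
    (normalizer_inf_normalizer_le_normalizer_sup H K)
  right_invariant := hH.right_invariant

theorem inf_left (hH : OperatorNormal M H (H ⊔ K)) (hK : OperatorNormal M K (H ⊔ K)) :
    OperatorNormal M (H ⊓ K) H where
  le := inf_le_left
  le_normalizer := (le_inf Subgroup.le_normalizer (le_sup_left.trans hK.le_normalizer)).trans
    inf_normalizer_le_normalizer_inf
  left_invariant := (le_inf hH.left_invariant hK.left_invariant).trans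
    inf_normalizer_le_normalizer_inf
  right_invariant := hH.left_invariant

theorem sup_sup_right (hL : OperatorNormal M L H) (hK : OperatorNormal M K (H ⊔ K)) :
    OperatorNormal M (L ⊔ K) (H ⊔ K) where
  le := sup_le_sup_right hL.le K
  le_normalizer := sup_le
    ((le_inf hL.le_normalizer (le_sup_left.trans hK.le_normalizer)).trans
      (normalizer_inf_normalizer_le_normalizer_sup L K))
    (le_sup_right.trans Subgroup.le_normalizer)
  left_invariant := (le_inf hL.left_invariant hK.left_invariant).trans
    (normalizer_inf_normalizer_le_normalizer_sup L K)
  right_invariant := hK.right_invariant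

theorem of_le_of_le (hH : OperatorNormal M H L) (hHK : H ≤ K) (hK : OperatorNormal M K L) :
    OperatorNormal M H K :=
  ⟨hHK, hK.le.trans hH.le_normalizer, hH.left_invariant, hK.left_invariant⟩

end OperatorNormal

end Group

section JordanHolder

open JordanHolderLattice

theorem exists_equiv_iso_of_isMaximal_succ {X : Type*} [Lattice X] [JordanHolderLattice X]
    {n n' : ℕ} {c : Fin (n + 1) → X} {c' : Fin (n' + 1) → X}
    (hc : ∀ i : Fin n, IsMaximal (c i.succ) (c i.castSucc))
    (hc' : ∀ i : Fin n', IsMaximal (c' i.succ) (c' i.castSucc))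
    (hzero : c 0 = c' 0) (hlast : c (Fin.last n) = c' (Fin.last n')) :
    ∃ σ : Fin n ≃ Fin n', ∀ i,
      Iso (c i.succ, c i.castSucc) (c' (σ i).succ, c' (σ i).castSucc) := by
  let reversed {m : ℕ} (d : Fin (m + 1) → X)
      (hd : ∀ i : Fin m, IsMaximal (d i.succ) (d i.castSucc)) : CompositionSeries X :=
    { length := m
      toFun := fun i ↦ d i.rev
      step := fun i ↦ by
        change IsMaximal (d i.castSucc.rev) (d i.succ.rev)
        simpa only [Fin.rev_castSucc, Fin.rev_succ] using hd i.rev }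
  obtain ⟨σ, hσ⟩ : (reversed c hc).Equivalent (reversed c' hc') :=
    CompositionSeries.jordan_holder _ _
      (by simpa [reversed, RelSeries.head] using hlast)
      (by simpa [reversed, RelSeries.last] using hzero)
  refine ⟨Fin.revPerm.trans (σ.trans Fin.revPerm), fun i ↦ ?_⟩
  simpa [reversed, Fin.rev_castSucc, Fin.rev_succ] using hσ i.rev

end JordanHolder

section InsertAfter

variable {α : Type*} {c : ℕ → α} {i n : ℕ} {z : α}

/-- The sequence `c` with the extra term `z` inserted between `c i` and `c (i + 1)`. -/
def insertAfter (c : ℕ → α) (i : ℕ) (z : α) (j : ℕ) : α :=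
  if j ≤ i then c j else if j = i + 1 then z else c (j - 1)

theorem insertAfter_of_le {j : ℕ} (hj : j ≤ i) : insertAfter c i z j = c j := if_pos hj

theorem insertAfter_succ_self : insertAfter c i z (i + 1) = z := by simp [insertAfter]

theorem insertAfter_succ_of_lt {j : ℕ} (hj : i < j) : insertAfter c i z (j + 1) = c j := by
  grind [insertAfter]

theorem forall_le_insertAfter {p : α → Prop} (hc : ∀ j ≤ n, p (c j)) (hi : i < n) (hz : p z) :
    ∀ j ≤ n + 1, p (insertAfter c i z j) := by
  grind [insertAfter]

theorem forall_lt_insertAfter {R : α → α → Prop} (hc : ∀ j < n, R (c j) (c (j + 1)))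
    (hi : i < n) (hleft : R (c i) z) (hright : R z (c (i + 1))) :
    ∀ j < n + 1, R (insertAfter c i z j) (insertAfter c i z (j + 1)) := by
  intro j hj
  rcases lt_trichotomy j i with hji | rfl | hij
  · rw [insertAfter_of_le hji.le, insertAfter_of_le hji]
    exact hc j (by lia)
  · rwa [insertAfter_of_le le_rfl, insertAfter_succ_self]
  · rw [insertAfter_succ_of_lt hij]
    obtain rfl | ⟨k, rfl, hk⟩ : j = i + 1 ∨ ∃ k, j = k + 1 ∧ i < k := by
      rcases j with _ | k
      · lia
      · rcases (Nat.lt_succ_iff.1 hij).eq_or_lt with rfl | hk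
        exacts [.inl rfl, .inr ⟨k, rfl, hk⟩]
    · rwa [insertAfter_succ_self]
    · rw [insertAfter_succ_of_lt hk]
      exact hc k (by lia)

end InsertAfter

namespace SubIso

variable {S : Type*} [Mul S] {A B C : Set S}

protected theorem refl (A : Set S) : SubIso A A := ⟨id, Set.bijOn_id A, fun _ _ _ _ ↦ rfl⟩

protected theorem symm [Nonempty S] (hA : ∀ a ∈ A, ∀ b ∈ A, a * b ∈ A) (h : SubIso A B) :
    SubIso B A := by
  obtain ⟨φ, hφ, hmul⟩ := h
  have hinv := hφ.invOn_invFunOn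
  have hψ := hφ.symm hinv.symm
  refine ⟨Function.invFunOn φ A, hψ, fun a ha b hb ↦ ?_⟩
  have hψa := hψ.mapsTo ha
  have hψb := hψ.mapsTo hb
  calc Function.invFunOn φ A (a * b)
      = Function.invFunOn φ A (φ (Function.invFunOn φ A a * Function.invFunOn φ A b)) := by
        rw [hmul _ hψa _ hψb, hinv.2 ha, hinv.2 hb]
    _ = Function.invFunOn φ A a * Function.invFunOn φ A b := hinv.1 (hA _ hψa _ hψb)

protected theorem trans (h : SubIso A B) (h' : SubIso B C) : SubIso A C := by
  obtain ⟨φ, hφ, hmul⟩ := h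
  obtain ⟨ψ, hψ, hmul'⟩ := h'
  refine ⟨ψ ∘ φ, hψ.comp hφ, fun a ha b hb ↦ ?_⟩
  simp only [Function.comp_apply, hmul a ha b hb, hmul' _ (hφ.mapsTo ha) _ (hφ.mapsTo hb)]

end SubIso

namespace InverseMonoid

variable {S : Type*} [InverseMonoid S] {e f s : S}

protected theorem inv_inv (a : S) : a⁻¹⁻¹ = a :=
  (inv_unique a⁻¹ a (inv_mul_inv a) (mul_inv_mul a)).symm

theorem inv_eq_self (he : IsIdempotentElem e) : e⁻¹ = e :=
  (inv_unique e e (by rw [he.eq, he.eq]) (by rw [he.eq, he.eq])).symm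

theorem right_mul_inv_mul_left (he : IsIdempotentElem e) (hf : IsIdempotentElem f) :
    f * (e * f)⁻¹ * e = (e * f)⁻¹ := by
  refine inv_unique (e * f) _ ?_ ?_
  · calc e * f * (f * (e * f)⁻¹ * e) * (e * f)
        = e * (f * f) * (e * f)⁻¹ * ((e * e) * f) := by simp only [mul_assoc]
      _ = e * f := by rw [he.eq, hf.eq, mul_inv_mul]
  · calc f * (e * f)⁻¹ * e * (e * f) * (f * (e * f)⁻¹ * e)
        = f * ((e * f)⁻¹ * ((e * e) * (f * f)) * (e * f)⁻¹) * e := by simp only [mul_assoc]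
      _ = f * (e * f)⁻¹ * e := by rw [he.eq, hf.eq, inv_mul_inv]

theorem isIdempotentElem_mul (he : IsIdempotentElem e) (hf : IsIdempotentElem f) :
    IsIdempotentElem (e * f) := by
  have hinv : IsIdempotentElem (e * f)⁻¹ := by
    calc (e * f)⁻¹ * (e * f)⁻¹
        = f * (e * f)⁻¹ * e * (f * (e * f)⁻¹ * e) := by rw [right_mul_inv_mul_left he hf]
      _ = f * ((e * f)⁻¹ * (e * f) * (e * f)⁻¹) * e := by simp only [mul_assoc]
      _ = (e * f)⁻¹ := by rw [inv_mul_inv, right_mul_inv_mul_left he hf]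
  rwa [← InverseMonoid.inv_inv (e * f), inv_eq_self hinv]

theorem idempotent_mul_comm (he : IsIdempotentElem e) (hf : IsIdempotentElem f) :
    e * f = f * e := by
  have h (a b : S) (ha : IsIdempotentElem a) (hb : IsIdempotentElem b) :
      a * b * (b * a) * (a * b) = a * b := by
    calc a * b * (b * a) * (a * b) = a * (b * b) * ((a * a) * b) := by simp only [mul_assoc]
      _ = a * b := by rw [ha.eq, hb.eq, (isIdempotentElem_mul ha hb).eq]
  rw [inv_unique (e * f) (f * e) (h e f he hf) (h f e hf he),
    inv_eq_self (isIdempotentElem_mul he hf)]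

theorem natLe_iff (he : IsIdempotentElem e) : NatLe e s ↔ e * s = e := by
  refine ⟨?_, fun h ↦ ⟨e, he, h.symm⟩⟩
  rintro ⟨p, hp, hps⟩
  have hpe : p * e = e := by
    calc p * e = p * (p * s) := by rw [← hps]
      _ = e := by rw [← mul_assoc, hp.eq, hps]
  calc e * s = p * e * s := by rw [hpe]
    _ = e * (p * s) := by rw [idempotent_mul_comm hp he, mul_assoc]
    _ = e := by rw [← hps, he.eq]

theorem mul_mem_upfilter {t : S} (he : IsIdempotentElem e) (hs : s ∈ upfilter e)
    (ht : t ∈ upfilter e) : s * t ∈ upfilter e :=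
  (natLe_iff he).2 (by rw [← mul_assoc, (natLe_iff he).1 hs, (natLe_iff he).1 ht])

theorem mul_mem_Fef (he : IsIdempotentElem e) (hf : IsIdempotentElem f)
    (hfe : CentralIn (upfilter e) f) : ∀ a ∈ Fef e f, ∀ b ∈ Fef e f, a * b ∈ Fef e f := by
  rintro _ ⟨s, hs, rfl⟩ _ ⟨t, ht, rfl⟩
  refine ⟨s * t, mul_mem_upfilter he hs ht, ?_⟩
  calc f * (s * t) = s * (f * f) * t := by rw [← mul_assoc, hfe.2 s hs, hf.eq]
    _ = f * s * (f * t) := by rw [hfe.2 s hs]; simp only [mul_assoc]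

theorem eq_of_mul_unit_eq_mul_unit {g h : Sˣ} (he : IsIdempotentElem e) (hf : IsIdempotentElem f)
    (heq : e * (g : S) = f * h) : e = f := by
  have hfe : f * e = e := (Units.mul_left_inj g).1 (by rw [mul_assoc, heq, ← mul_assoc, hf.eq])
  have hef : e * f = f := (Units.mul_left_inj h).1 (by rw [mul_assoc, ← heq, ← mul_assoc, he.eq])
  rw [← hfe, ← idempotent_mul_comm he hf, hef]

end InverseMonoid

section Natconn

variable {S : Type*} [Monoid S] {e f : S}

theorem mem_natconn {g : Sˣ} : g ∈ natconn e ↔ e * (g : S) = e := Iff.rfl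

theorem natconn_le_natconn_of_mul_eq (h : e * f = e) : natconn f ≤ natconn e := by
  intro g hg
  rw [mem_natconn] at hg ⊢
  rw [← h, mul_assoc, hg]

theorem mul_unit_eq_mul_unit_iff {g h : Sˣ} :
    e * (g : S) = e * h ↔ g * h⁻¹ ∈ natconn e := by
  rw [mem_natconn, Units.val_mul, ← mul_assoc, Units.mul_inv_eq_iff_eq_mul]

theorem natconn_conj (g : Sˣ) (e : S) :
    natconn ((g : S) * e * (g⁻¹ : Sˣ)) = (natconn e).map (MulAut.conj g : Sˣ →* Sˣ) := by
  ext h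
  have hmap : h ∈ (natconn e).map (MulAut.conj g : Sˣ →* Sˣ) ↔ g⁻¹ * h * g ∈ natconn e :=
    mem_map_equiv.trans (by rw [MulAut.conj_symm_apply])
  have hmul : (g : S) * e * (g⁻¹ : Sˣ) * h = g * (e * (g⁻¹ * h * g : Sˣ)) * (g⁻¹ : Sˣ) := by
    simp only [Units.val_mul, mul_assoc, Units.mul_inv, mul_one]
  rw [hmap, mem_natconn, mem_natconn, hmul, Units.mul_left_inj, Units.mul_right_inj]

end Natconn

/-- The idempotents of `S`. Under a natural connection that is a dual isomorphism they are ordered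
by inclusion of the subgroups `natconn e`, so this is the *reverse* of the natural partial order:
the least element is `1`, the greatest is `0`, and joins are products. -/
@[ext]
structure Idem (S : Type*) [Monoid S] where
  val : S
  isIdempotentElem : IsIdempotentElem val

namespace Idem

instance {S : Type*} [Monoid S] : CoeOut (Idem S) S := ⟨val⟩

open InverseMonoid

instance {S : Type*} [Monoid S] : LE (Idem S) := ⟨fun x y ↦ natconn (x : S) ≤ natconn (y : S)⟩

instance {S : Type*} [Monoid S] : LT (Idem S) := ⟨fun x y ↦ natconn (x : S) < natconn (y : S)⟩

section Lattice

variable {S : Type*} [InverseMonoid S]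

instance : Max (Idem S) :=
  ⟨fun x y ↦ ⟨x * y, isIdempotentElem_mul x.isIdempotentElem y.isIdempotentElem⟩⟩

theorem coe_sup (x y : Idem S) : ((x ⊔ y : Idem S) : S) = x * y := rfl

theorem coe_mul_comm (x y : Idem S) : (x : S) * y = y * x :=
  idempotent_mul_comm x.isIdempotentElem y.isIdempotentElem

theorem exists_eq_mul_unit_of_mem_upfilter (hfact : Factorizable S) {y : Idem S} {s : S}
    (hs : s ∈ upfilter (y : S)) :
    ∃ k : Idem S, k ≤ y ∧ ∃ g ∈ natconn (y : S), s = k * g := by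
  have hys : (y : S) * s = y := (natLe_iff y.isIdempotentElem).1 hs
  obtain ⟨k, _, hk, ⟨g, rfl⟩, rfl⟩ := hfact s
  have hyk : (y : S) * k = y := by
    calc (y : S) * k = k * (y * (k * g)) := by rw [hys, idempotent_mul_comm y.isIdempotentElem hk]
      _ = y * (k * k) * g := by
        rw [← mul_assoc, idempotent_mul_comm hk y.isIdempotentElem]; simp only [mul_assoc]
      _ = y := by rw [hk.eq, mul_assoc, hys]
  rw [← mul_assoc, hyk] at hys
  exact ⟨⟨k, hk⟩, natconn_le_natconn_of_mul_eq hyk, g, hys, rfl⟩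

variable [hθ : Fact (NatconnDualIso S)]

theorem natconn_injective : Function.Injective fun x : Idem S ↦ natconn (x : S) :=
  fun x y h ↦ Idem.ext (hθ.out.1 x y x.isIdempotentElem y.isIdempotentElem h)

theorem le_iff_mul_eq {x y : Idem S} : x ≤ y ↔ (y : S) * x = y :=
  (hθ.out.2.1 y x y.isIdempotentElem x.isIdempotentElem).symm.trans
    (natLe_iff y.isIdempotentElem)

theorem natconn_sup (x y : Idem S) :
    natconn ((x ⊔ y : Idem S) : S) = natconn (x : S) ⊔ natconn (y : S) := by
  obtain ⟨j, hj, hj_eq⟩ := (hθ.out.2.2 x y x.isIdempotentElem y.isIdempotentElem).1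
  refine le_antisymm ?_ (sup_le ?_ ?_)
  · have hxj : j * x = j := le_iff_mul_eq (y := ⟨j, hj⟩).1 (le_sup_left.trans_eq hj_eq.symm)
    have hyj : j * y = j := le_iff_mul_eq (y := ⟨j, hj⟩).1 (le_sup_right.trans_eq hj_eq.symm)
    rw [← hj_eq]
    exact natconn_le_natconn_of_mul_eq (by rw [coe_sup, ← mul_assoc, hxj, hyj])
  · exact natconn_le_natconn_of_mul_eq (by
      rw [coe_sup, coe_mul_comm, mul_assoc, x.isIdempotentElem.eq])
  · exact natconn_le_natconn_of_mul_eq (by rw [coe_sup, mul_assoc, y.isIdempotentElem.eq])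

noncomputable instance : Min (Idem S) where
  min x y :=
    let h := (hθ.out.2.2 x y x.isIdempotentElem y.isIdempotentElem).2
    ⟨h.choose, h.choose_spec.1⟩

theorem natconn_inf (x y : Idem S) :
    natconn ((x ⊓ y : Idem S) : S) = natconn (x : S) ⊓ natconn (y : S) :=
  (hθ.out.2.2 x y x.isIdempotentElem y.isIdempotentElem).2.choose_spec.2

noncomputable instance : Lattice (Idem S) :=
  natconn_injective.lattice _ Iff.rfl Iff.rfl natconn_sup natconn_inf

variable {x y z : Idem S}

theorem sup_inf_assoc_of_left_le_normalizer (hxz : x ≤ z)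
    (h : natconn (x : S) ≤ normalizer (natconn (y : S))) : (x ⊔ y) ⊓ z = x ⊔ y ⊓ z :=
  natconn_injective <| by
    simpa only [natconn_sup, natconn_inf] using
      sup_inf_assoc_of_coe_sup_eq_mul (coe_mul_of_left_le_normalizer_right _ _ h) hxz

theorem sup_inf_assoc_of_right_le_normalizer (hxz : x ≤ z)
    (h : natconn (y : S) ≤ normalizer (natconn (x : S))) : (x ⊔ y) ⊓ z = x ⊔ y ⊓ z :=
  natconn_injective <| by
    simpa only [natconn_sup, natconn_inf] using
      sup_inf_assoc_of_coe_sup_eq_mul (coe_mul_of_right_le_normalizer_left _ _ h) hxz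

end Lattice

section Central

variable {S : Type*} [InverseMonoid S] [hθ : Fact (NatconnDualIso S)] {x y : Idem S}

theorem mul_unit_comm_iff {g : Sˣ} :
    (x : S) * g = g * x ↔ g ∈ normalizer (natconn (x : S)) := by
  have hconj : IsIdempotentElem ((g : S) * x * (g⁻¹ : Sˣ)) := by
    calc (g : S) * x * (g⁻¹ : Sˣ) * (g * x * (g⁻¹ : Sˣ)) = g * (x * x) * (g⁻¹ : Sˣ) := by
          simp only [mul_assoc, Units.inv_mul_cancel_left]
      _ = g * x * (g⁻¹ : Sˣ) := by rw [x.isIdempotentElem.eq]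
  rw [mem_normalizer_iff_map_conj_eq, ← natconn_conj, eq_comm, ← Units.mul_inv_eq_iff_eq_mul]
  exact ⟨fun h ↦ by rw [h], hθ.out.1 _ _ hconj x.isIdempotentElem⟩

theorem mul_mul_unit_comm (k : Idem S) {g : Sˣ} (hg : g ∈ normalizer (natconn (x : S))) :
    (x : S) * (k * g) = k * g * x := by
  rw [← mul_assoc, coe_mul_comm, mul_assoc, mul_unit_comm_iff.2 hg, mul_assoc]

theorem centralIn_upfilter_iff (hfact : Factorizable S) :
    CentralIn (upfilter (y : S)) (x : S) ↔
      x ≤ y ∧ natconn (y : S) ≤ normalizer (natconn (x : S)) := by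
  constructor
  · rintro ⟨hx, hcomm⟩
    exact ⟨natconn_le_natconn_of_mul_eq ((natLe_iff y.isIdempotentElem).1 hx),
      fun g hg ↦ mul_unit_comm_iff.1 (hcomm g ((natLe_iff y.isIdempotentElem).2 hg))⟩
  · rintro ⟨hxy, hyx⟩
    refine ⟨(natLe_iff y.isIdempotentElem).2 (le_iff_mul_eq.1 hxy), fun s hs ↦ ?_⟩
    obtain ⟨k, -, g, hg, rfl⟩ := exists_eq_mul_unit_of_mem_upfilter hfact hs
    exact mul_mul_unit_comm k (hyx hg)

end Central

section Factors

variable {S : Type*} [InverseMonoid S] [Fact (NatconnDualIso S)] {x y : Idem S}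

theorem mem_Fef_iff (hfact : Factorizable S) (hxy : x ≤ y) {a : S} :
    a ∈ Fef (y : S) (x : S) ↔
      ∃ k : Idem S, x ≤ k ∧ k ≤ y ∧ ∃ g ∈ natconn (y : S), a = k * g := by
  constructor
  · rintro ⟨s, hs, rfl⟩
    obtain ⟨k, hk, g, hg, rfl⟩ := exists_eq_mul_unit_of_mem_upfilter hfact hs
    exact ⟨x ⊔ k, le_sup_left, sup_le hxy hk, g, hg, (mul_assoc _ _ _).symm⟩
  · rintro ⟨k, hxk, hky, g, hg, rfl⟩
    refine ⟨k * g, (natLe_iff y.isIdempotentElem).2 ?_, ?_⟩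
    · rw [← mul_assoc, le_iff_mul_eq.1 hky, hg]
    · change (x : S) * (k * g) = k * g
      rw [← mul_assoc, coe_mul_comm, le_iff_mul_eq.1 hxk]

theorem mapsTo_mul_Fef (hfact : Factorizable S) (x y : Idem S) :
    Set.MapsTo ((x : S) * ·) (Fef (y : S) ((x ⊓ y : Idem S) : S))
      (Fef ((x ⊔ y : Idem S) : S) (x : S)) := by
  intro a ha
  obtain ⟨k, -, hky, g, hg, rfl⟩ := (mem_Fef_iff hfact inf_le_right).1 ha
  exact (mem_Fef_iff hfact le_sup_left).2 ⟨x ⊔ k, le_sup_left, sup_le_sup_left hky x, g,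
    (le_sup_right : y ≤ x ⊔ y) hg, (mul_assoc _ _ _).symm⟩

theorem sup_inf_eq_of_inf_le (h : natconn (y : S) ≤ normalizer (natconn (x : S))) {k : Idem S}
    (hxk : x ⊓ y ≤ k) (hky : k ≤ y) : (x ⊔ k) ⊓ y = k := by
  rw [sup_comm, sup_inf_assoc_of_left_le_normalizer hky (le_trans hky h), sup_eq_left.2 hxk]

theorem injOn_mul_Fef (hfact : Factorizable S)
    (h : natconn (y : S) ≤ normalizer (natconn (x : S))) :
    Set.InjOn ((x : S) * ·) (Fef (y : S) ((x ⊓ y : Idem S) : S)) := by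
  intro a ha b hb hab
  obtain ⟨k, hxk, hky, g, hg, rfl⟩ := (mem_Fef_iff hfact inf_le_right).1 ha
  obtain ⟨l, hxl, hly, g', hg', rfl⟩ := (mem_Fef_iff hfact inf_le_right).1 hb
  simp only [← mul_assoc, ← coe_sup] at hab
  have hsup : x ⊔ k = x ⊔ l :=
    Idem.ext (eq_of_mul_unit_eq_mul_unit (x ⊔ k).isIdempotentElem (x ⊔ l).isIdempotentElem hab)
  obtain rfl : k = l := by
    rw [← sup_inf_eq_of_inf_le h hxk hky, hsup, sup_inf_eq_of_inf_le h hxl hly]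
  rw [mul_unit_eq_mul_unit_iff] at hab ⊢
  rw [← sup_inf_eq_of_inf_le h hxk hky, natconn_inf]
  exact mem_inf.2 ⟨hab, mul_mem hg (inv_mem hg')⟩

theorem surjOn_mul_Fef (hfact : Factorizable S)
    (h : natconn (y : S) ≤ normalizer (natconn (x : S))) :
    Set.SurjOn ((x : S) * ·) (Fef (y : S) ((x ⊓ y : Idem S) : S))
      (Fef ((x ⊔ y : Idem S) : S) (x : S)) := by
  intro b hb
  obtain ⟨k, hxk, hk, g, hg, rfl⟩ := (mem_Fef_iff hfact le_sup_left).1 hb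
  rw [natconn_sup, ← SetLike.mem_coe, coe_mul_of_right_le_normalizer_left _ _ h] at hg
  obtain ⟨u, hu, v, hv, rfl⟩ := hg
  have hkv : (k ⊓ y : Idem S) * (v : S) ∈ Fef (y : S) ((x ⊓ y : Idem S) : S) :=
    (mem_Fef_iff hfact inf_le_right).2
      ⟨k ⊓ y, inf_le_inf_right y hxk, inf_le_right, v, hv, rfl⟩
  have hsup : x ⊔ k ⊓ y = k := by
    rw [inf_comm, ← sup_inf_assoc_of_right_le_normalizer hxk h, inf_eq_right.2 hk]
  have hku : (k : S) * u = k := hxk hu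
  refine ⟨_, hkv, ?_⟩
  calc (x : S) * ((k ⊓ y : Idem S) * v) = (x ⊔ k ⊓ y : Idem S) * v := by
        rw [coe_sup, mul_assoc]
    _ = k * (u * v : Sˣ) := by rw [hsup, Units.val_mul, ← mul_assoc, hku]

theorem subIso_Fef_inf_Fef_sup (hfact : Factorizable S)
    (h : natconn (y : S) ≤ normalizer (natconn (x : S))) :
    SubIso (Fef (y : S) ((x ⊓ y : Idem S) : S)) (Fef ((x ⊔ y : Idem S) : S) (x : S)) := by
  refine ⟨((x : S) * ·), ⟨mapsTo_mul_Fef hfact x y, injOn_mul_Fef hfact h,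
    surjOn_mul_Fef hfact h⟩, fun a ha b _ ↦ ?_⟩
  obtain ⟨k, -, -, g, hg, rfl⟩ := (mem_Fef_iff hfact inf_le_right).1 ha
  have hcomm := mul_mul_unit_comm k (h hg)
  calc (x : S) * (k * g * b) = k * g * (x * x) * b := by
        rw [← mul_assoc, hcomm, x.isIdempotentElem.eq]
    _ = x * (k * g) * (x * b) := by rw [hcomm]; simp only [mul_assoc]

theorem mul_mem_Fef_inf (hfact : Factorizable S)
    (h : natconn (y : S) ≤ normalizer (natconn (x : S))) :
    ∀ a ∈ Fef (y : S) ((x ⊓ y : Idem S) : S), ∀ b ∈ Fef (y : S) ((x ⊓ y : Idem S) : S),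
      a * b ∈ Fef (y : S) ((x ⊓ y : Idem S) : S) := by
  refine mul_mem_Fef y.isIdempotentElem (x ⊓ y).isIdempotentElem
    ((centralIn_upfilter_iff hfact).2 ⟨inf_le_right, ?_⟩)
  rw [natconn_inf]
  exact (le_inf h Subgroup.le_normalizer).trans inf_normalizer_le_normalizer_inf

end Factors

end Idem

/-- A proper `OperatorNormal` step of idempotents that is maximal: these are the steps of a
composition series. -/
structure IsMaximalNormal {S : Type*} [Monoid S] (M : Subgroup Sˣ) (x y : Idem S) :
    Prop where
  lt : x < y
  normal : OperatorNormal M (natconn (x : S)) (natconn (y : S))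
  eq_or_eq : ∀ z : Idem S, x ≤ z → OperatorNormal M (natconn (z : S)) (natconn (y : S)) →
    z = x ∨ z = y

namespace IsMaximalNormal

variable {S : Type*} [InverseMonoid S] [Fact (NatconnDualIso S)] {M : Subgroup Sˣ} {x y z : Idem S}

theorem sup_eq (hx : IsMaximalNormal M x z) (hy : IsMaximalNormal M y z) (hxy : x ≠ y) :
    x ⊔ y = z := by
  have hnormal : OperatorNormal M (natconn ((x ⊔ y : Idem S) : S)) (natconn (z : S)) := by
    rw [Idem.natconn_sup]
    exact hx.normal.sup hy.normal
  by_contra hne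
  have hsup_x := (hx.eq_or_eq _ le_sup_left hnormal).resolve_right hne
  have hsup_y := (hy.eq_or_eq _ le_sup_right hnormal).resolve_right hne
  exact hxy (hsup_x.symm.trans hsup_y)

theorem inf_left (hx : IsMaximalNormal M x (x ⊔ y)) (hy : IsMaximalNormal M y (x ⊔ y)) :
    IsMaximalNormal M (x ⊓ y) x := by
  have hx_normal := hx.normal
  have hy_normal := hy.normal
  rw [Idem.natconn_sup] at hx_normal hy_normal
  refine ⟨inf_lt_left.2 fun hxy ↦ hy.lt.ne (sup_eq_right.2 hxy).symm, ?_, fun z hz hzx ↦ ?_⟩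
  · rw [Idem.natconn_inf]
    exact hx_normal.inf_left hy_normal
  have hzy : OperatorNormal M (natconn ((z ⊔ y : Idem S) : S))
      (natconn ((x ⊔ y : Idem S) : S)) := by
    rw [Idem.natconn_sup, Idem.natconn_sup]
    exact hzx.sup_sup_right hy_normal
  have hz_eq : (z ⊔ y) ⊓ x = z := by
    rw [Idem.sup_inf_assoc_of_left_le_normalizer hzx.le
      (hzx.le.trans (le_sup_left.trans hy_normal.le_normalizer)), inf_comm, sup_eq_left.2 hz]
  rcases hy.eq_or_eq _ le_sup_right hzy with h | h
  · left
    rw [← hz_eq, h, inf_comm]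
  · right
    rw [← hz_eq, h, inf_comm, inf_sup_self]

end IsMaximalNormal

/-- The Jordan–Hölder structure on idempotents whose maximal steps are those of
`IsMaximalNormal M`. -/
abbrev operatorJordanHolderLattice {S : Type*} [InverseMonoid S] [Fact (NatconnDualIso S)]
    (M : Subgroup Sˣ) : JordanHolderLattice (Idem S) where
  IsMaximal := IsMaximalNormal M
  lt_of_isMaximal := IsMaximalNormal.lt
  sup_eq_of_isMaximal := IsMaximalNormal.sup_eq
  isMaximal_inf_left_of_isMaximal_sup := IsMaximalNormal.inf_left

theorem subIso_of_iso {S : Type*} [InverseMonoid S] [Fact (NatconnDualIso S)]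
    (hfact : Factorizable S) {M : Subgroup Sˣ} {x y x' y' : Idem S}
    (h : letI := operatorJordanHolderLattice M; JordanHolderLattice.Iso (x, y) (x', y')) :
    SubIso (Fef (y : S) (x : S)) (Fef (y' : S) (x' : S)) := by
  let := operatorJordanHolderLattice M
  -- `SubIso` is symmetric only on subsets closed under multiplication, hence both directions.
  let MutualSubIso (a b : Idem S × Idem S) : Prop :=
    SubIso (Fef (a.2 : S) (a.1 : S)) (Fef (b.2 : S) (b.1 : S)) ∧
      SubIso (Fef (b.2 : S) (b.1 : S)) (Fef (a.2 : S) (a.1 : S))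
  have hmutual : MutualSubIso (x, y) (x', y') := by
    refine JordanHolderLattice.Iso.rel MutualSubIso ⟨.refl _, .refl _⟩ (fun h ↦ h.symm)
      (fun h h' ↦ ⟨h.1.trans h'.1, h'.2.trans h.2⟩) (fun {u v} huv ↦ ?_) h
    have hv : natconn (v : S) ≤ normalizer (natconn (u : S)) :=
      le_trans (le_sup_right : v ≤ u ⊔ v) huv.normal.le_normalizer
    have hiso := Idem.subIso_Fef_inf_Fef_sup hfact hv
    exact ⟨hiso.symm (Idem.mul_mem_Fef_inf hfact hv), hiso⟩
  exact hmutual.1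

/-- `IsOperatorSeries M n c` says that `0 = c 0, …, c n = 1` are idempotents whose images under the
natural connection form a subnormal series of `M`-invariant subgroups. -/
structure IsOperatorSeries {S : Type*} [Monoid S] [Zero S] (M : Subgroup Sˣ) (n : ℕ) (c : ℕ → S) :
    Prop where
  zero : c 0 = 0
  last : c n = 1
  isIdempotentElem : ∀ i ≤ n, IsIdempotentElem (c i)
  normal : ∀ i < n, OperatorNormal M (natconn (c (i + 1))) (natconn (c i))

namespace IsOperatorSeries

variable {S : Type*} [InverseMonoidWithZero S] {M : Subgroup Sˣ} {n : ℕ} {c : ℕ → S}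

/-- The terms of a series as elements of `Idem S`, in which they are decreasing. -/
def terms (hc : IsOperatorSeries M n c) (i : Fin (n + 1)) : Idem S :=
  ⟨c i, hc.isIdempotentElem i i.is_le⟩

theorem insertAfter (hc : IsOperatorSeries M n c) {i : Fin n} {z : Idem S}
    (hleft : OperatorNormal M (natconn (z : S)) (natconn (c i)))
    (hright : hc.terms i.succ ≤ z) :
    IsOperatorSeries M (n + 1) (insertAfter c i z) where
  zero := by rw [insertAfter_of_le (Nat.zero_le _), hc.zero]
  last := by rw [insertAfter_succ_of_lt i.isLt, hc.last]
  isIdempotentElem := forall_le_insertAfter hc.isIdempotentElem i.isLt z.isIdempotentElem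
  normal := forall_lt_insertAfter (R := fun a b : S ↦ OperatorNormal M (natconn b) (natconn a))
    hc.normal i.isLt hleft ((hc.normal i i.isLt).of_le_of_le hright hleft)

variable [Fact (NatconnDualIso S)]

theorem antitone_terms (hc : IsOperatorSeries M n c) : Antitone hc.terms :=
  Fin.antitone_iff_succ_le.2 fun i ↦ (hc.normal i i.isLt).le

theorem isMaximalNormal_terms (hc : IsCompositionOf (IsOperatorSeries M) n c) (i : Fin n) :
    IsMaximalNormal M (hc.1.terms i.succ) (hc.1.terms i.castSucc) := by
  obtain ⟨hseries, hinj, hrefine⟩ := hc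
  refine ⟨(hseries.antitone_terms i.castSucc_lt_succ.le).lt_of_ne fun h ↦ ?_,
    hseries.normal i i.isLt, fun z hz hz_normal ↦ ?_⟩
  · have := hinj _ i.succ.is_le _ i.castSucc.is_le (congrArg Idem.val h)
    simp at this
  · obtain ⟨k, hkn, hzk⟩ := hrefine _ _ (hseries.insertAfter hz_normal hz)
      (fun j hj ↦ (le_or_gt j i).elim (fun h ↦ ⟨j, by lia, insertAfter_of_le h⟩)
        fun h ↦ ⟨j + 1, by lia, insertAfter_succ_of_lt h⟩) (i + 1) (by lia)
    rw [insertAfter_succ_self] at hzk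
    obtain rfl : z = hseries.terms ⟨k, by lia⟩ := Idem.ext hzk
    rcases le_or_gt k i with hki | hik
    · right
      exact le_antisymm (α := Idem S) hz_normal.le
        (hseries.antitone_terms (a := ⟨k, _⟩) (b := i.castSucc) hki)
    · left
      exact (hseries.antitone_terms (a := i.succ) (b := ⟨k, _⟩) hik).antisymm hz

end IsOperatorSeries

theorem seriesIso_of_equiv {S : Type*} [Monoid S] {n n' : ℕ} {c c' : ℕ → S} (σ : Fin n ≃ Fin n')
    (h : ∀ i : Fin n, SubIso (Fef (c i) (c (i + 1))) (Fef (c' (σ i)) (c' (σ i + 1)))) :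
    SeriesIso n c n' c' := by
  obtain rfl : n = n' := Fin.equiv_iff_eq.1 ⟨σ⟩
  let τ : Equiv.Perm ℕ := Equiv.Perm.extendDomain σ Fin.equivSubtype
  have hτ (i : Fin n) : τ i = σ i := Equiv.Perm.extendDomain_apply_image σ Fin.equivSubtype i
  refine ⟨rfl, τ, ⟨fun i hi ↦ ?_, τ.injective.injOn, fun j hj ↦ ?_⟩, fun i hi ↦ ?_⟩
  · change τ (⟨i, hi⟩ : Fin n) < n
    exact hτ _ ▸ (σ _).isLt
  · refine ⟨σ.symm ⟨j, hj⟩, (σ.symm _).isLt, ?_⟩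
    rw [hτ, Equiv.apply_symm_apply]
  · have := h ⟨i, hi⟩
    rwa [← hτ] at this

section Main

variable {S : Type*} [InverseMonoidWithZero S] {n n' : ℕ} {c c' : ℕ → S}

theorem seriesIso_of_isCompositionOf [Fact (NatconnDualIso S)] (hfact : Factorizable S)
    {M : Subgroup Sˣ} (hc : IsCompositionOf (IsOperatorSeries M) n c)
    (hc' : IsCompositionOf (IsOperatorSeries M) n' c') : SeriesIso n c n' c' := by
  let := operatorJordanHolderLattice M
  obtain ⟨σ, hσ⟩ := exists_equiv_iso_of_isMaximal_succ (c := hc.1.terms) (c' := hc'.1.terms)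
    (IsOperatorSeries.isMaximalNormal_terms hc) (IsOperatorSeries.isMaximalNormal_terms hc')
    (Idem.ext (hc.1.zero.trans hc'.1.zero.symm)) (Idem.ext (hc.1.last.trans hc'.1.last.symm))
  exact seriesIso_of_equiv σ fun i ↦ subIso_of_iso hfact (hσ i)

theorem isSubcentralSeries_iff [Fact (NatconnDualIso S)] (hfact : Factorizable S) :
    IsSubcentralSeries n c ↔ IsOperatorSeries ⊥ n c := by
  have hstep (hidem : ∀ i ≤ n, IsIdempotentElem (c i)) (i : ℕ) (hi : i < n) :
      CentralIn (upfilter (c i)) (c (i + 1)) ↔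
        OperatorNormal ⊥ (natconn (c (i + 1))) (natconn (c i)) :=
    (Idem.centralIn_upfilter_iff hfact (x := ⟨_, hidem (i + 1) hi⟩)
      (y := ⟨_, hidem i hi.le⟩)).trans OperatorNormal.bot_iff.symm
  constructor
  · rintro ⟨hzero, hlast, hidem, hcentral⟩
    exact ⟨hzero, hlast, hidem, fun i hi ↦ (hstep hidem i hi).1 (hcentral i hi)⟩
  · rintro ⟨hzero, hlast, hidem, hnormal⟩
    exact ⟨hzero, hlast, hidem, fun i hi ↦ (hstep hidem i hi).2 (hnormal i hi)⟩

theorem natconn_zero : natconn (0 : S) = ⊤ :=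
  (eq_top_iff' _).2 fun _ ↦ InverseMonoidWithZero.zero_mul _

theorem upfilter_zero : upfilter (0 : S) = Set.univ :=
  Set.eq_univ_of_forall fun s ↦
    ⟨0, InverseMonoidWithZero.zero_mul 0, (InverseMonoidWithZero.zero_mul s).symm⟩

theorem centralIn_univ_iff [Fact (NatconnDualIso S)] (hfact : Factorizable S) {e : S}
    (he : IsIdempotentElem e) : CentralIn Set.univ e ↔ (natconn e).Normal := by
  have h := Idem.centralIn_upfilter_iff hfact (x := ⟨e, he⟩)
    (y := ⟨0, InverseMonoidWithZero.zero_mul 0⟩)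
  rw [upfilter_zero, natconn_zero, top_le_iff, normalizer_eq_top_iff] at h
  exact h.trans (and_iff_right (natconn_zero (S := S) ▸ le_top : natconn e ≤ natconn 0))

theorem isCentralSeries_iff [hθ : Fact (NatconnDualIso S)] (hfact : Factorizable S) :
    IsCentralSeries n c ↔ IsOperatorSeries ⊤ n c := by
  constructor
  · rintro ⟨hzero, hlast, hidem, hle, hcentral⟩
    have hnormal (i : ℕ) (hi : i ≤ n) : (natconn (c i)).Normal := by
      rcases i with _ | i
      · rw [hzero, natconn_zero]
        infer_instance
      · exact (centralIn_univ_iff hfact (hidem _ hi)).1 (hcentral i hi)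
    exact ⟨hzero, hlast, hidem, fun i hi ↦ OperatorNormal.top_iff.2
      ⟨(hθ.out.2.1 _ _ (hidem i hi.le) (hidem _ hi)).1 (hle i hi), hnormal _ hi, hnormal _ hi.le⟩⟩
  · rintro ⟨hzero, hlast, hidem, hnormal⟩
    exact ⟨hzero, hlast, hidem,
      fun i hi ↦ (hθ.out.2.1 _ _ (hidem i hi.le) (hidem _ hi)).2 (hnormal i hi).le,
      fun i hi ↦ (centralIn_univ_iff hfact (hidem _ hi)).2
        (OperatorNormal.top_iff.1 (hnormal i hi)).2.1⟩

end Main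

/-- analogue of the Jordan–Hölder theorem: In a factorizable inverse
monoid with zero whose natural connection is a dual isomorphism onto a sublattice of
the lattice of subgroups of the group of units, any two composition subcentral
(resp. composition central) idempotent series are isomorphic. -/
theorem stmt_9 {S : Type*} [InverseMonoidWithZero S] (hfact : Factorizable S)
    (hθ : NatconnDualIso S) :
    (∀ (n : ℕ) (c : ℕ → S) (n' : ℕ) (c' : ℕ → S),
      IsCompositionOf IsSubcentralSeries n c → IsCompositionOf IsSubcentralSeries n' c' →
      SeriesIso n c n' c') ∧
    (∀ (n : ℕ) (c : ℕ → S) (n' : ℕ) (c' : ℕ → S),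
      IsCompositionOf IsCentralSeries n c → IsCompositionOf IsCentralSeries n' c' →
      SeriesIso n c n' c') := by
  have : Fact (NatconnDualIso S) := ⟨hθ⟩
  have hsubcentral : IsSubcentralSeries (S := S) = IsOperatorSeries ⊥ :=
    funext₂ fun _ _ ↦ propext (isSubcentralSeries_iff hfact)
  have hcentral : IsCentralSeries (S := S) = IsOperatorSeries ⊤ :=
    funext₂ fun _ _ ↦ propext (isCentralSeries_iff hfact)
  rw [hsubcentral, hcentral]
  exact ⟨fun _ _ _ _ ↦ seriesIso_of_isCompositionOf hfact,
    fun _ _ _ _ ↦ seriesIso_of_isCompositionOf hfact⟩
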